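/- arXiv:1510.07255 — 2 statements merged into one kernel-verified Lean document; each statement's English description precedes it below -/
import Mathlib

section
/- The deformed bracket [[·,·]] makes S a Lie algebra over K: for all f, g ∈ S one has [[f,g]] ∈ S (the deformed bracket of divergence-free fields is divergence-free), the bracket is K-bilinear and alternating ([[f,f]] = 0), and the Jacobi identity [[f,[[g,h]]]] + [[g,[[h,f]]]] + [[h,[[f,g]]]] = 0 holds for all f, g, h ∈ S. (This Lie algebra is the desuperization F(mb(3;N|8)), a deform of the divergence-free Lie algebra svect(5) in characteristic 2.) -/
open MvPolynomial

/-- The polynomial ring `R = K[u₁, …, u₅]` (index `i : Fin 5` corresponds to `u_{i+1}`). -/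
abbrev R5 (K : Type*) [Field K] := MvPolynomial (Fin 5) K

noncomputable section

variable (K : Type*) [Field K]

/-- The set `S` of divergence-free vector fields `Σ f_i ∂_i`, i.e. `svect(5)`,
encoded by their coefficient tuples. -/
def svectFive : Set (Fin 5 → R5 K) :=
  {f | ∑ i : Fin 5, pderiv i (f i) = 0}

/-- The building block `∂_i f₄ · ∂_j g₅ + ∂_i f₅ · ∂_j g₄` of the deforming cocycle
(recall `f₄ = f 3` and `f₅ = f 4` in `Fin 5` indexing). -/
def defTerm (f g : Fin 5 → R5 K) (i j : Fin 5) : R5 K :=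
  pderiv i (f 3) * pderiv j (g 4) + pderiv i (f 4) * pderiv j (g 3)

/-- The deforming cocycle: for `m ∈ {1,2,3}` it is the sum of `defTerm` over both ordered
pairs `(i,j)` of distinct indices with `{i,j,m} = {1,2,3}`; for `m ∈ {4,5}` it vanishes. -/
def defCocycle (f g : Fin 5 → R5 K) : Fin 5 → R5 K :=
  ![defTerm K f g 1 2 + defTerm K f g 2 1,
    defTerm K f g 0 2 + defTerm K f g 2 0,
    defTerm K f g 0 1 + defTerm K f g 1 0,
    0, 0]

/-- The deformed bracket `[[f,g]]_m = Σ_i (f_i ∂_i g_m + g_i ∂_i f_m) + cocycle`. -/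
def defBracket (f g : Fin 5 → R5 K) : Fin 5 → R5 K := fun m =>
  (∑ i : Fin 5, (f i * pderiv i (g m) + g i * pderiv i (f m))) + defCocycle K f g m

end

theorem pderiv_pderiv_comm {σ R : Type*} [CommSemiring R] (i j : σ) (p : MvPolynomial σ R) :
    pderiv i (pderiv j p) = pderiv j (pderiv i p) := by
  ext m
  simp only [coeff_pderiv, Finsupp.add_apply]
  rw [add_right_comm]
  rcases eq_or_ne i j with rfl | h
  · rfl
  · simp [h, h.symm, mul_right_comm]

section

variable {K : Type*} [Field K]

/-- The undeformed bracket `Σ_i (f_i ∂_i g_m + g_i ∂_i f_m)` of vector fields. -/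
noncomputable def fieldBracket (f g : Fin 5 → R5 K) : Fin 5 → R5 K := fun m =>
  ∑ i : Fin 5, (f i * pderiv i (g m) + g i * pderiv i (f m))

theorem defBracket_eq (f g : Fin 5 → R5 K) :
    defBracket K f g = fieldBracket f g + defCocycle K f g := rfl

/-- The derivation `Σ_i f_i ∂_i` of the polynomial ring. -/
noncomputable abbrev fieldDerivation (f : Fin 5 → R5 K) : Derivation K (R5 K) (R5 K) :=
  mkDerivation K f

theorem fieldDerivation_apply (f : Fin 5 → R5 K) (p : R5 K) :
    fieldDerivation f p = ∑ i : Fin 5, f i * pderiv i p := by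
  have h : fieldDerivation f = ∑ i : Fin 5, f i • pderiv i := by
    refine derivation_ext fun j => ?_
    fin_cases j <;> simp [Fin.sum_univ_five, pderiv_X]
  simp [h, Fin.sum_univ_five]

theorem fieldBracket_apply (f g : Fin 5 → R5 K) (m : Fin 5) :
    fieldBracket f g m = fieldDerivation f (g m) + fieldDerivation g (f m) := by
  simp only [fieldBracket, fieldDerivation_apply, Finset.sum_add_distrib]

theorem pderiv_fieldDerivation (f : Fin 5 → R5 K) (i : Fin 5) (p : R5 K) :
    pderiv i (fieldDerivation f p) =
      fieldDerivation f (pderiv i p) + ∑ k : Fin 5, pderiv i (f k) * pderiv k p := by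
  simp only [fieldDerivation_apply, map_sum, pderiv_mul, Finset.sum_add_distrib,
    pderiv_pderiv_comm i]
  exact add_comm _ _

theorem fieldBracket_add_right (f g h : Fin 5 → R5 K) :
    fieldBracket f (g + h) = fieldBracket f g + fieldBracket f h := by
  funext m
  simp only [fieldBracket, Pi.add_apply, map_add, ← Finset.sum_add_distrib]
  exact Finset.sum_congr rfl fun i _ => by ring

theorem fieldBracket_comm (f g : Fin 5 → R5 K) : fieldBracket f g = fieldBracket g f := by
  funext m
  exact Finset.sum_congr rfl fun i _ => add_comm _ _

theorem fieldBracket_smul_right (a : K) (f g : Fin 5 → R5 K) :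
    fieldBracket f (a • g) = a • fieldBracket f g := by
  funext m
  simp only [fieldBracket, Pi.smul_apply, Derivation.map_smul, Finset.smul_sum, smul_add,
    mul_smul_comm, smul_mul_assoc]

theorem defCocycle_add_right (f g h : Fin 5 → R5 K) :
    defCocycle K f (g + h) = defCocycle K f g + defCocycle K f h := by
  funext m
  fin_cases m <;> simp [defCocycle, defTerm] <;> ring

theorem defCocycle_comm (f g : Fin 5 → R5 K) : defCocycle K f g = defCocycle K g f := by
  funext m
  fin_cases m <;> simp [defCocycle, defTerm] <;> ring

theorem defCocycle_smul_right (a : K) (f g : Fin 5 → R5 K) :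
    defCocycle K f (a • g) = a • defCocycle K f g := by
  funext m
  fin_cases m <;> simp [defCocycle, defTerm]

/-- The cocycle takes values in the fields with vanishing last two components, on which it
vanishes. -/
theorem defCocycle_defCocycle (f g h : Fin 5 → R5 K) :
    defCocycle K f (defCocycle K g h) = 0 := by
  funext m
  fin_cases m <;> simp [defCocycle, defTerm]

theorem defBracket_comm (f g : Fin 5 → R5 K) : defBracket K f g = defBracket K g f := by
  rw [defBracket_eq, defBracket_eq, fieldBracket_comm, defCocycle_comm]

theorem defBracket_add_right (f g h : Fin 5 → R5 K) :
    defBracket K f (g + h) = defBracket K f g + defBracket K f h := by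
  simp only [defBracket_eq, fieldBracket_add_right, defCocycle_add_right]
  abel

theorem defBracket_smul_right (a : K) (f g : Fin 5 → R5 K) :
    defBracket K f (a • g) = a • defBracket K f g := by
  simp only [defBracket_eq, fieldBracket_smul_right, defCocycle_smul_right, smul_add]

theorem fieldDerivation_defCocycle (f g : Fin 5 → R5 K) (p : R5 K) :
    fieldDerivation (defCocycle K f g) p = defCocycle K f g 0 * pderiv 0 p
      + defCocycle K f g 1 * pderiv 1 p + defCocycle K f g 2 * pderiv 2 p := by
  simp [fieldDerivation_apply, Fin.sum_univ_five, defCocycle]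

variable [CharP K 2]

theorem defBracket_self (f : Fin 5 → R5 K) : defBracket K f f = 0 := by
  funext m
  have h2 : (2 : R5 K) = 0 := CharTwo.two_eq_zero
  simp only [defBracket_eq, Pi.add_apply, fieldBracket_apply, CharTwo.add_self_eq_zero, zero_add]
  fin_cases m <;> simp [defCocycle, defTerm] <;> ring_nf <;> simp only [h2, mul_zero, add_zero]

theorem fieldDerivation_fieldBracket (f g : Fin 5 → R5 K) (p : R5 K) :
    fieldDerivation (fieldBracket f g) p =
      fieldDerivation f (fieldDerivation g p) + fieldDerivation g (fieldDerivation f p) := by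
  have h : fieldDerivation (fieldBracket f g) = ⁅fieldDerivation f, fieldDerivation g⁆ := by
    refine derivation_ext fun j => ?_
    simp only [Derivation.commutator_apply, mkDerivation_X, CharTwo.sub_eq_add,
      fieldBracket_apply]
  rw [h, Derivation.commutator_apply, CharTwo.sub_eq_add]

theorem fieldBracket_mem_svectFive {f g : Fin 5 → R5 K} (hf : f ∈ svectFive K)
    (hg : g ∈ svectFive K) : fieldBracket f g ∈ svectFive K := by
  simp only [svectFive, Set.mem_ofPred_eq] at hf hg ⊢
  have h : ∑ i, ∑ k, pderiv i (g k) * pderiv k (f i) =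
      ∑ i, ∑ k, pderiv i (f k) * pderiv k (g i) := by
    rw [Finset.sum_comm]
    simp only [mul_comm]
  simp only [fieldBracket_apply, map_add, pderiv_fieldDerivation, Finset.sum_add_distrib,
    ← map_sum, hf, hg, map_zero, zero_add, h, CharTwo.add_self_eq_zero]

theorem defCocycle_mem_svectFive (f g : Fin 5 → R5 K) : defCocycle K f g ∈ svectFive K := by
  have h2 : (2 : R5 K) = 0 := CharTwo.two_eq_zero
  simp only [svectFive, Set.mem_ofPred_eq, Fin.sum_univ_five]
  simp [defCocycle, defTerm, Derivation.leibniz, pderiv_pderiv_comm]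
  ring_nf
  simp [h2]

theorem fieldBracket_jacobi (f g h : Fin 5 → R5 K) :
    fieldBracket f (fieldBracket g h) + fieldBracket g (fieldBracket h f)
      + fieldBracket h (fieldBracket f g) = 0 := by
  have h2 : (2 : R5 K) = 0 := CharTwo.two_eq_zero
  funext m
  simp only [Pi.add_apply, Pi.zero_apply, fieldBracket_apply, map_add,
    fieldDerivation_fieldBracket]
  ring_nf
  simp only [h2, mul_zero, add_zero]

/-- The deforming cochain is a cocycle on divergence-free fields. -/
theorem defCocycle_isCocycle {f g h : Fin 5 → R5 K} (hf : f ∈ svectFive K)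
    (hg : g ∈ svectFive K) (hh : h ∈ svectFive K) :
    (fieldBracket f (defCocycle K g h) + defCocycle K f (fieldBracket g h))
      + (fieldBracket g (defCocycle K h f) + defCocycle K g (fieldBracket h f))
      + (fieldBracket h (defCocycle K f g) + defCocycle K h (fieldBracket f g)) = 0 := by
  have h2 : (2 : R5 K) = 0 := CharTwo.two_eq_zero
  simp only [svectFive, Set.mem_ofPred_eq, Fin.sum_univ_five] at hf hg hh
  funext m
  simp only [Pi.add_apply, Pi.zero_apply, fieldBracket_apply, fieldDerivation_defCocycle]
  fin_cases m
  · linear_combination (norm := skip) defCocycle K g h 0 * hf + defCocycle K h f 0 * hg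
      + defCocycle K f g 0 * hh
    simp [defCocycle, defTerm, fieldBracket_apply, pderiv_fieldDerivation, Fin.sum_univ_five]
    ring_nf
    simp only [h2, mul_zero, add_zero]
  · linear_combination (norm := skip) defCocycle K g h 1 * hf + defCocycle K h f 1 * hg
      + defCocycle K f g 1 * hh
    simp [defCocycle, defTerm, fieldBracket_apply, pderiv_fieldDerivation, Fin.sum_univ_five]
    ring_nf
    simp only [h2, mul_zero, add_zero]
  · linear_combination (norm := skip) defCocycle K g h 2 * hf + defCocycle K h f 2 * hg
      + defCocycle K f g 2 * hh
    simp [defCocycle, defTerm, fieldBracket_apply, pderiv_fieldDerivation, Fin.sum_univ_five]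
    ring_nf
    simp only [h2, mul_zero, add_zero]
  all_goals
    simp [defCocycle, defTerm]
    ring_nf
    simp only [h2, mul_zero, add_zero]

theorem defBracket_jacobi {f g h : Fin 5 → R5 K} (hf : f ∈ svectFive K)
    (hg : g ∈ svectFive K) (hh : h ∈ svectFive K) :
    defBracket K f (defBracket K g h) + defBracket K g (defBracket K h f)
      + defBracket K h (defBracket K f g) = 0 := by
  simp only [defBracket_eq, fieldBracket_add_right, defCocycle_add_right, defCocycle_defCocycle]
  linear_combination (exp := 1) fieldBracket_jacobi f g h + defCocycle_isCocycle hf hg hh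

end

/-- For `p = 2`, the deformed bracket `[[·,·]]` makes `S = svect(5)` a Lie algebra over `K`:
`S` is closed under `[[·,·]]`, the bracket is `K`-bilinear and alternating on `S`, and the
Jacobi identity holds on `S`.  (This Lie algebra is `F(mb(3;N|8))`, a deform of
`svect(5)` in characteristic 2.) -/
theorem defBracket_isLieAlgebra {K : Type*} [Field K] [CharP K 2] :
    (∀ f ∈ svectFive K, ∀ g ∈ svectFive K, defBracket K f g ∈ svectFive K) ∧
    (∀ f ∈ svectFive K, ∀ g ∈ svectFive K, ∀ h ∈ svectFive K,
      defBracket K f (g + h) = defBracket K f g + defBracket K f h ∧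
      defBracket K (f + g) h = defBracket K f h + defBracket K g h) ∧
    (∀ (a : K), ∀ f ∈ svectFive K, ∀ g ∈ svectFive K,
      defBracket K f (a • g) = a • defBracket K f g ∧
      defBracket K (a • f) g = a • defBracket K f g) ∧
    (∀ f ∈ svectFive K, defBracket K f f = 0) ∧
    (∀ f ∈ svectFive K, ∀ g ∈ svectFive K, ∀ h ∈ svectFive K,
      defBracket K f (defBracket K g h) + defBracket K g (defBracket K h f)
        + defBracket K h (defBracket K f g) = 0) := by
  refine ⟨fun f hf g hg => ?_, fun f _ g _ h _ => ⟨defBracket_add_right f g h, ?_⟩,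
    fun a f _ g _ => ⟨defBracket_smul_right a f g, ?_⟩, fun f _ => defBracket_self f,
    fun f hf g hg h hh => defBracket_jacobi hf hg hh⟩
  · have h₁ : ∑ i, pderiv i (fieldBracket f g i) = 0 := fieldBracket_mem_svectFive hf hg
    have h₂ : ∑ i, pderiv i (defCocycle K f g i) = 0 := defCocycle_mem_svectFive f g
    simp only [svectFive, Set.mem_ofPred_eq, defBracket_eq, Pi.add_apply, map_add,
      Finset.sum_add_distrib, h₁, h₂, add_zero]
  · rw [defBracket_comm, defBracket_add_right, defBracket_comm h f, defBracket_comm h g]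
  · rw [defBracket_comm, defBracket_smul_right, defBracket_comm g f]
end

section
/- For all f, g ∈ B one has [M_f, M_g] = M_{{f,g}} (commutator of derivations of B). Moreover, for any fixed a, b ∈ K, the subspace b_{a,b} := {f ∈ B : (b + a·E_q)(∂_τ f) + a·Δf = 0} is closed under the pericontact bracket: if f, g ∈ b_{a,b} then {f,g} ∈ b_{a,b}. Consequently {M_f : f ∈ b_{a,b}} is a Lie subalgebra of Der_K(B) — the characteristic-2 analog po_{a,b} = F(b_{a,b}(n)) of the deformed Buttin series, a subalgebra of the contact-type vector fields having no analog for p ≠ 2. -/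
open MvPolynomial

/-- Index type for the variables of `B`: `none` is `τ`, `Sum.inl i` is `q_i` and
`Sum.inr i` is `ξ_i`. -/
abbrev BIdx (n : ℕ) := Option (Fin n ⊕ Fin n)

/-- The polynomial ring `K[τ, q₁,…,qₙ, ξ₁,…,ξₙ]`, whose quotient by `(ξ₁²,…,ξₙ²)` is the
algebra `B` of the desuperized pericontact series for `p = 2`. -/
abbrev BR (K : Type*) [Field K] (n : ℕ) := MvPolynomial (BIdx n) K

noncomputable section

variable (K : Type*) [Field K] (n : ℕ)

/-- The ideal `(ξ₁², …, ξₙ²)`, so that `B = K[τ,q][ξ] ⧸ xiIdeal`; working modulo this ideal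
encodes working in `B` (everything descends since `∂(ξ_i²) = 2ξ_i = 0` in char 2). -/
def xiIdeal : Ideal (BR K n) :=
  Ideal.span (Set.range fun i : Fin n => (X (some (Sum.inr i)) : BR K n) ^ 2)

/-- The Euler operator `E_q = Σ q_i ∂_{q_i}`. -/
def eulerQ (f : BR K n) : BR K n :=
  ∑ i : Fin n, X (some (Sum.inl i)) * pderiv (some (Sum.inl i)) f

/-- The operator `Δ = Σ ∂_{q_i} ∘ ∂_{ξ_i}`. -/
def lapQXi (f : BR K n) : BR K n :=
  ∑ i : Fin n, pderiv (some (Sum.inl i)) (pderiv (some (Sum.inr i)) f)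

/-- The pericontact vector field
`M_f = f ∂_τ + Σ ( ∂_{q_i}f (∂_{ξ_i} + q_i ∂_τ) + (∂_{ξ_i}f + q_i ∂_τ f) ∂_{q_i} )`. -/
def MF (f : BR K n) : BR K n → BR K n := fun h =>
  f * pderiv (none : BIdx n) h
    + ∑ i : Fin n,
        (pderiv (some (Sum.inl i)) f *
            (pderiv (some (Sum.inr i)) h
              + X (some (Sum.inl i)) * pderiv (none : BIdx n) h)
          + (pderiv (some (Sum.inr i)) f
              + X (some (Sum.inl i)) * pderiv (none : BIdx n) f) *
            pderiv (some (Sum.inl i)) h)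

/-- The pericontact bracket
`{f,g} = (∂_τ f)(g + E_q g) + (f + E_q f)(∂_τ g) + Σ (∂_{q_i}f ∂_{ξ_i}g + ∂_{ξ_i}f ∂_{q_i}g)`. -/
def periBr (f g : BR K n) : BR K n :=
  pderiv (none : BIdx n) f * (g + eulerQ K n g)
    + (f + eulerQ K n f) * pderiv (none : BIdx n) g
    + ∑ i : Fin n,
        (pderiv (some (Sum.inl i)) f * pderiv (some (Sum.inr i)) g
          + pderiv (some (Sum.inr i)) f * pderiv (some (Sum.inl i)) g)

/-- The defining expression `(b + a E_q)(∂_τ f) + a Δ f` of the subalgebra `b_{a,b}`. -/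
def babCond (a b : K) (f : BR K n) : BR K n :=
  C b * pderiv (none : BIdx n) f + C a * eulerQ K n (pderiv (none : BIdx n) f)
    + C a * lapQXi K n f

end

namespace Pericontact

section

variable {K : Type*} [Field K] {n : ℕ}

local notation:max "∂τ" => pderiv (R := K) (none : BIdx n)
local notation:max "∂q" i:max => pderiv (R := K) (some (Sum.inl i) : BIdx n)
local notation:max "∂ξ" i:max => pderiv (R := K) (some (Sum.inr i) : BIdx n)

/-- The Buttin bracket `Σ (∂_{q_i}f ∂_{ξ_i}g + ∂_{ξ_i}f ∂_{q_i}g)`, as a derivation in `g`. -/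
noncomputable def buttin (f : BR K n) : Derivation K (BR K n) (BR K n) :=
  ∑ i : Fin n, ((∂q i f) • ∂ξ i + (∂ξ i f) • ∂q i)

lemma derivation_sum_apply {ι : Type*} (s : Finset ι)
    (d : ι → Derivation K (BR K n) (BR K n)) (f : BR K n) :
    (∑ i ∈ s, d i) f = ∑ i ∈ s, d i f := by
  classical
  induction s using Finset.induction_on with
  | empty => simp
  | insert i s hi ih => simp [Finset.sum_insert hi, ih]

lemma buttin_apply (f g : BR K n) :
    buttin f g = ∑ i : Fin n, (∂q i f * ∂ξ i g + ∂ξ i f * ∂q i g) := by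
  simp [buttin, derivation_sum_apply]

/-- The Euler operator `E_q`, as a derivation. -/
noncomputable def eulerDer : Derivation K (BR K n) (BR K n) :=
  ∑ i : Fin n, (X (some (Sum.inl i)) : BR K n) • ∂q i

lemma eulerDer_apply (f : BR K n) : eulerDer f = eulerQ K n f := by
  simp [eulerDer, eulerQ, derivation_sum_apply]

lemma pderiv_comm (i j : BIdx n) (f : BR K n) :
    pderiv i (pderiv j f) = pderiv j (pderiv i f) := by
  have h : ⁅pderiv (R := K) i, pderiv (R := K) j⁆ = 0 := by
    apply MvPolynomial.derivation_ext
    intro k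
    classical
    simp [Derivation.commutator_apply, pderiv_X, Pi.single_apply, apply_ite]
  have := congrArg (fun d => d f) h
  simpa [Derivation.commutator_apply, sub_eq_zero] using this

lemma MF_apply (f h : BR K n) :
    MF K n f h = (f + eulerQ K n f) * ∂τ h + ∂τ f * eulerQ K n h + buttin f h := by
  simp only [MF, buttin_apply, eulerQ, add_mul, mul_add, Finset.sum_add_distrib,
    Finset.sum_mul, Finset.mul_sum]
  have h₁ : ∀ i : Fin n, ∂q i f * (X (some (Sum.inl i)) * ∂τ h)
      = X (some (Sum.inl i)) * ∂q i f * ∂τ h := fun i => by ring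
  have h₂ : ∀ i : Fin n, X (some (Sum.inl i)) * ∂τ f * ∂q i h
      = ∂τ f * (X (some (Sum.inl i)) * ∂q i h) := fun i => by ring
  simp only [h₁, h₂]
  ring

lemma periBr_apply (f g : BR K n) :
    periBr K n f g = ∂τ f * (g + eulerQ K n g) + (f + eulerQ K n f) * ∂τ g + buttin f g := by
  rw [periBr, buttin_apply]

lemma buttin_comm (f g : BR K n) : buttin f g = buttin g f := by
  simp only [buttin_apply]
  exact Finset.sum_congr rfl fun i _ => by ring

lemma buttin_add_left (f g h : BR K n) : buttin (f + g) h = buttin f h + buttin g h := by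
  rw [buttin_comm, map_add, buttin_comm h f, buttin_comm h g]

lemma buttin_mul_left (f g h : BR K n) :
    buttin (f * g) h = f * buttin g h + g * buttin f h := by
  rw [buttin_comm, Derivation.leibniz, buttin_comm h f, buttin_comm h g]
  simp

lemma eulerQ_add (f g : BR K n) : eulerQ K n (f + g) = eulerQ K n f + eulerQ K n g := by
  simp only [← eulerDer_apply, map_add]

lemma eulerQ_mul (f g : BR K n) :
    eulerQ K n (f * g) = f * eulerQ K n g + g * eulerQ K n f := by
  simp only [← eulerDer_apply, Derivation.leibniz, smul_eq_mul]

lemma pderiv_buttin (j : BIdx n) (f g : BR K n) :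
    pderiv j (buttin f g) = buttin (pderiv j f) g + buttin f (pderiv j g) := by
  simp only [buttin_apply, map_sum, ← Finset.sum_add_distrib]
  refine Finset.sum_congr rfl fun i _ => ?_
  simp only [map_add, Derivation.leibniz, smul_eq_mul, pderiv_comm j]
  ring

lemma pderiv_tau_eulerQ (f : BR K n) : ∂τ (eulerQ K n f) = eulerQ K n (∂τ f) := by
  simp only [eulerQ, map_sum]
  refine Finset.sum_congr rfl fun i _ => ?_
  rw [Derivation.leibniz, pderiv_X_of_ne (by simp), pderiv_comm]
  simp

lemma pderiv_xi_eulerQ (k : Fin n) (f : BR K n) :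
    ∂ξ k (eulerQ K n f) = eulerQ K n (∂ξ k f) := by
  simp only [eulerQ, map_sum]
  refine Finset.sum_congr rfl fun i _ => ?_
  rw [Derivation.leibniz, pderiv_X_of_ne (by simp), pderiv_comm]
  simp

lemma pderiv_q_eulerQ (k : Fin n) (f : BR K n) :
    ∂q k (eulerQ K n f) = eulerQ K n (∂q k f) + ∂q k f := by
  classical
  simp only [eulerQ, map_sum, Derivation.leibniz, smul_eq_mul, Finset.sum_add_distrib]
  refine congrArg₂ (· + ·) (Finset.sum_congr rfl fun i _ => by rw [pderiv_comm]) ?_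
  rw [Finset.sum_eq_single k (fun i _ hi => by rw [pderiv_X_of_ne (by simpa using hi), mul_zero])
    (by simp), pderiv_X_self, mul_one]

lemma eulerQ_buttin_add (f g : BR K n) :
    eulerQ K n (buttin f g) + buttin f g
      = buttin (eulerQ K n f) g + buttin f (eulerQ K n g) := by
  simp only [buttin_apply, ← eulerDer_apply, map_sum, ← Finset.sum_add_distrib]
  refine Finset.sum_congr rfl fun i _ => ?_
  simp only [map_add, Derivation.leibniz, smul_eq_mul]
  simp only [eulerDer_apply, pderiv_q_eulerQ, pderiv_xi_eulerQ]
  ring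

lemma lapQXi_add (f g : BR K n) : lapQXi K n (f + g) = lapQXi K n f + lapQXi K n g := by
  simp [lapQXi, Finset.sum_add_distrib]

lemma lapQXi_mul (f g : BR K n) :
    lapQXi K n (f * g) = f * lapQXi K n g + g * lapQXi K n f + buttin f g := by
  simp only [lapQXi, buttin_apply, Finset.mul_sum, ← Finset.sum_add_distrib]
  refine Finset.sum_congr rfl fun i _ => ?_
  simp only [map_add, Derivation.leibniz, smul_eq_mul]
  ring

lemma pderiv_lapQXi (j : BIdx n) (f : BR K n) :
    pderiv j (lapQXi K n f) = lapQXi K n (pderiv j f) := by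
  simp only [lapQXi, map_sum]
  exact Finset.sum_congr rfl fun i _ => by rw [pderiv_comm, pderiv_comm j]

lemma lapQXi_eulerQ (f : BR K n) :
    lapQXi K n (eulerQ K n f) = eulerQ K n (lapQXi K n f) + lapQXi K n f := by
  simp only [lapQXi, ← eulerDer_apply, map_sum, ← Finset.sum_add_distrib]
  refine Finset.sum_congr rfl fun i _ => ?_
  simp only [eulerDer_apply, pderiv_q_eulerQ, pderiv_xi_eulerQ]

section CharTwo

variable [CharP K 2]

lemma pderiv_pderiv_self (i : BIdx n) (f : BR K n) : pderiv i (pderiv i f) = 0 := by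
  classical
  induction f using MvPolynomial.induction_on with
  | C a => simp
  | add p q hp hq => simp [hp, hq]
  | mul_X p j hp =>
    simp only [Derivation.leibniz, smul_eq_mul, map_add, hp]
    rcases eq_or_ne j i with rfl | h
    · simp [CharTwo.add_self_eq_zero]
    · simp [pderiv_X, h]

lemma lapQXi_lapQXi (f : BR K n) : lapQXi K n (lapQXi K n f) = 0 := by
  simp only [lapQXi, map_sum]
  rw [← Finset.sum_product']
  refine Finset.sum_involution (fun a _ => a.swap) ?_ ?_ (fun _ _ => Finset.mem_univ _)
    (fun a _ => Prod.swap_swap a)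
  · rintro ⟨i, j⟩ -
    rw [← CharTwo.sub_eq_add, sub_eq_zero]
    simp only [Prod.fst_swap, Prod.snd_swap]
    rw [pderiv_comm (some (Sum.inr i)) (some (Sum.inl j)), pderiv_comm (some (Sum.inl i)),
      pderiv_comm (some (Sum.inr i)) (some (Sum.inr j)),
      pderiv_comm (some (Sum.inl i)) (some (Sum.inr j))]
  · rintro ⟨i, j⟩ - h heq
    obtain rfl : j = i := congrArg Prod.fst heq
    refine h ?_
    dsimp only
    rw [pderiv_comm (some (Sum.inr j)), pderiv_pderiv_self]

lemma lapQXi_buttin (f g : BR K n) :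
    lapQXi K n (buttin f g) = buttin (lapQXi K n f) g + buttin f (lapQXi K n g) := by
  have h : lapQXi K n (f * lapQXi K n g + g * lapQXi K n f + buttin f g) = 0 := by
    rw [← lapQXi_mul, lapQXi_lapQXi]
  simp only [lapQXi_add, lapQXi_mul, lapQXi_lapQXi] at h
  have h2 : (2 : BR K n) = 0 := CharTwo.two_eq_zero
  rw [buttin_comm (lapQXi K n f)]
  linear_combination h - (lapQXi K n f * lapQXi K n g
    + buttin g (lapQXi K n f) + buttin f (lapQXi K n g)) * h2

lemma buttin_jacobi (f g h : BR K n) :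
    buttin f (buttin g h) + buttin g (buttin f h) + buttin (buttin f g) h = 0 := by
  classical
  have key : ⁅buttin f, buttin g⁆ = buttin (buttin f g) := by
    apply MvPolynomial.derivation_ext
    rintro (_ | k | k)
    · simp [Derivation.commutator_apply, buttin_apply, pderiv_X]
    · have hX : ∀ u : BR K n, buttin u (X (some (Sum.inl k))) = ∂ξ k u := fun u => by
        simp [buttin_apply, pderiv_X, Pi.single_apply]
      rw [Derivation.commutator_apply, hX, hX, hX, pderiv_buttin, buttin_comm g,
        CharTwo.sub_eq_add, add_comm]
    · have hX : ∀ u : BR K n, buttin u (X (some (Sum.inr k))) = ∂q k u := fun u => by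
        simp [buttin_apply, pderiv_X, Pi.single_apply]
      rw [Derivation.commutator_apply, hX, hX, hX, pderiv_buttin, buttin_comm g,
        CharTwo.sub_eq_add, add_comm]
  rw [← key, Derivation.commutator_apply, CharTwo.sub_eq_add, CharTwo.add_self_eq_zero]

lemma eulerQ_buttin (f g : BR K n) :
    eulerQ K n (buttin f g)
      = buttin (eulerQ K n f) g + buttin f (eulerQ K n g) + buttin f g := by
  rw [← eulerQ_buttin_add, add_assoc, CharTwo.add_self_eq_zero, add_zero]

/-- The pericontact bracket is mapped to the commutator of vector fields. -/
lemma MF_commutator (f g h : BR K n) :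
    MF K n f (MF K n g h) - MF K n g (MF K n f h) = MF K n (periBr K n f g) h := by
  have h2 : (2 : BR K n) = 0 := CharTwo.two_eq_zero
  have hJ := buttin_jacobi f g h
  simp only [MF_apply, periBr_apply, map_add, Derivation.leibniz, smul_eq_mul, eulerQ_add,
    eulerQ_mul, buttin_add_left, buttin_mul_left, pderiv_buttin, eulerQ_buttin,
    pderiv_tau_eulerQ, pderiv_pderiv_self, buttin_comm g f, buttin_comm g (eulerQ K n f),
    buttin_comm g (∂τ f)]
  grind

lemma babCond_periBr (a b : K) (f g : BR K n) :
    babCond K n a b (periBr K n f g)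
      = MF K n f (babCond K n a b g) + MF K n g (babCond K n a b f) := by
  have h2 : (2 : BR K n) = 0 := CharTwo.two_eq_zero
  have hE : ∀ c, eulerQ K n (C c) = 0 := fun c => by simp [eulerQ]
  have hB : ∀ c (u : BR K n), buttin u (C c) = 0 := fun c u => by simp
  simp only [babCond, MF_apply, periBr_apply, map_add, Derivation.leibniz, smul_eq_mul,
    eulerQ_add, eulerQ_mul, buttin_add_left, pderiv_buttin, eulerQ_buttin,
    pderiv_tau_eulerQ, pderiv_pderiv_self, lapQXi_add, lapQXi_mul, lapQXi_buttin,
    lapQXi_eulerQ, pderiv_lapQXi, pderiv_C, hE, hB]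
  simp only [buttin_comm g]
  grind

/-- Pericontact vector fields descend to the quotient by `(ξ₁², …, ξₙ²)`. -/
lemma MF_mem_xiIdeal (f : BR K n) {u : BR K n} (hu : u ∈ xiIdeal K n) :
    MF K n f u ∈ xiIdeal K n := by
  rw [xiIdeal] at hu
  induction hu using Submodule.span_induction with
  | mem x hx =>
    obtain ⟨i, rfl⟩ := hx
    have h0 : ∀ d : Derivation K (BR K n) (BR K n), d (X (some (Sum.inr i)) ^ 2) = 0 :=
      fun d => by rw [pow_two, Derivation.leibniz, CharTwo.add_self_eq_zero]
    simp [MF_apply, ← eulerDer_apply, h0]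
  | zero => simp [MF_apply, ← eulerDer_apply]
  | add x y _ _ hx hy =>
    have h : MF K n f (x + y) = MF K n f x + MF K n f y := by
      simp only [MF_apply, ← eulerDer_apply, map_add]
      ring
    exact h ▸ add_mem hx hy
  | smul c x hx ih =>
    have h : MF K n f (c • x) = c * MF K n f x + MF K n f c * x := by
      simp only [MF_apply, ← eulerDer_apply, smul_eq_mul, Derivation.leibniz]
      ring
    exact h ▸ add_mem (Ideal.mul_mem_left _ _ ih) (Ideal.mul_mem_left _ _ hx)

end CharTwo

end

end Pericontact

/-- For `p = 2`: (1) `[M_f, M_g] = M_{{f,g}}` as operators on `B` (i.e. modulo `xiIdeal`);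
(2) for any `a, b ∈ K`, the subspace `b_{a,b} = {f : (b + a E_q)(∂_τ f) + a Δ f = 0 in B}`
is closed under the pericontact bracket.  Consequently `{M_f : f ∈ b_{a,b}}` is a Lie
subalgebra of the derivations of `B` — the `p = 2` analog `po_{a,b} = F(b_{a,b}(n))` of the
deformed Buttin series. -/
theorem pericontact_morphism_and_bab_closed {K : Type*} [Field K] [CharP K 2]
    (n : ℕ) (hn : 1 ≤ n) (a b : K) :
    (∀ f g h : BR K n,
      MF K n f (MF K n g h) - MF K n g (MF K n f h) - MF K n (periBr K n f g) h
        ∈ xiIdeal K n) ∧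
    (∀ f g : BR K n, babCond K n a b f ∈ xiIdeal K n → babCond K n a b g ∈ xiIdeal K n →
      babCond K n a b (periBr K n f g) ∈ xiIdeal K n) := by
  refine ⟨fun f g h => ?_, fun f g hf hg => ?_⟩
  · rw [Pericontact.MF_commutator, sub_self]
    exact Ideal.zero_mem _
  · rw [Pericontact.babCond_periBr]
    exact add_mem (Pericontact.MF_mem_xiIdeal f hg) (Pericontact.MF_mem_xiIdeal g hf)
end
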